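/- arXiv:1004.2848 — 2 statements merged into one kernel-verified Lean document; each statement's English description precedes it below -/
import Mathlib

section
/- Fix α > 0. (i) For every β > 0, every eigen-measure ν for (α,β) with exponent P, and every n ≥ 2: ν([0^n*₀])·ν([1*₁]) = e^{β(1 − 1/2^{n−1})}·ν([0*₀])·ν([1^n*₁]). (ii) If moreover for every β > 0 an eigen-measure ν_β with exponent P(β) is given, then for every n ≥ 2 and every ε > 0 there exists β₁ such that for all β ≥ β₁, ν_β([1^n*₁]) > 0 and ν_β([0^n*₀]) ≥ e^{β(1 − 1/2^{n−1} − ε)}·ν_β([1^n*₁]). -/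
/-!
Applying the eigen-measure equation to indicators of (clopen) rings gives, for `a ∈ {0, 1}` with
weights `w₀ = 1`, `w₁ = 3`, the recursion `e^P ν[a^{n+1} *_a] = e^{-β w_a / 2^{n+1}} ν[a^n *_a]`,
valid from `n = 0` on if `[a^0 *_a]` is read as the complement of `[a]`. Its closed form
(`ring_formula`) yields (i) at once.

For (ii) it suffices to bound `ν[0*₀] / ν[1*₁]` below by a constant. By the recursion this ratio is
`e^β A / B` with `A = 1 - ν[0]` and `B = 1 - ν[1] ≤ 1`. Since `P > 0`, the point `0^∞` has no mass,
so `ν[0]` is the sum of the masses of its rings; comparing ring by ring with `[1]` gives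
`ν[0] B ≤ e^{2β} ν[1] A` (`cyl_ratio`). As `ν[1] ≤ A` and `B ≥ ν[0] = 1 - A`, this implies
`1 - A ≤ e^β A`, whence `2 e^β A ≥ 1` and the ratio is at least `1/2` (`ring_one_le`).
Positivity of `ν[1^n *₁]` comes from `B ≥ ν[2] > 0`.
-/

open MeasureTheory Filter Topology

noncomputable section

/-- The full shift space `Σ = {0,1,2}^ℕ`. -/
abbrev Sig : Type := ℕ → Fin 3

/-- The shift map `σ`. -/
def shift (x : Sig) : Sig := fun n => x (n + 1)

/-- The fixed point `0^∞`. -/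
def zeroSeq : Sig := fun _ => 0

/-- The fixed point `1^∞`. -/
def oneSeq : Sig := fun _ => 1

/-- Prepending a symbol: `a·x = (a, x₀, x₁, …)`. -/
def cons (a : Fin 3) (x : Sig) : Sig := fun n => Nat.casesOn n a x

open Classical in
/-- The metric `d(x,y) = (1/2)^(min{n : x n ≠ y n})`, with `d(x,x) = 0`. -/
def dist3 (x y : Sig) : ℝ :=
  if h : x ≠ y then (1 / 2 : ℝ) ^ Nat.find (Function.ne_iff.mp h) else 0

/-- The potential `A_α`. -/
def pot (α : ℝ) (x : Sig) : ℝ :=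
  if x 0 = 0 then -dist3 x zeroSeq
  else if x 0 = 1 then -(3 * dist3 x oneSeq)
  else -α

/-- The transfer operator `L_β` (for parameter `α`). -/
def transfer (α β : ℝ) (f : Sig → ℝ) : Sig → ℝ :=
  fun x => ∑ a : Fin 3, Real.exp (β * pot α (cons a x)) * f (cons a x)

/-- The ring `[a^n *_a] = {x : x_i = a for i < n, x_n ≠ a}`. -/
def ringSet (a : Fin 3) (n : ℕ) : Set Sig := {x | (∀ i < n, x i = a) ∧ x n ≠ a}

/-- The cylinder `[a] = {x : x₀ = a}`. -/
def cyl (a : Fin 3) : Set Sig := {x | x 0 = a}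

/-- `H` is locally ring-constant: constant on `[2]` and on each ring `[0^m*₀]`, `[1^m*₁]`. -/
def LocallyRingConstant (H : Sig → ℝ) : Prop :=
  (∀ x ∈ cyl 2, ∀ y ∈ cyl 2, H x = H y) ∧
  (∀ m : ℕ, 1 ≤ m → ∀ x ∈ ringSet 0 m, ∀ y ∈ ringSet 0 m, H x = H y) ∧
  (∀ m : ℕ, 1 ≤ m → ∀ x ∈ ringSet 1 m, ∀ y ∈ ringSet 1 m, H x = H y)

/-- An eigen-measure for `(α,β)` with exponent `P`:  a Borel probability measure `ν`
with `P > 0` and `∫ L_β f dν = e^P ∫ f dν` for every continuous `f`. -/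
structure IsEigenMeasure (α β P : ℝ) (ν : Measure Sig) : Prop where
  P_pos : 0 < P
  prob : IsProbabilityMeasure ν
  eigenMeas : ∀ f : Sig → ℝ, Continuous f →
    ∫ x, transfer α β f x ∂ν = Real.exp P * ∫ x, f x ∂ν

/-- Eigen-data `(P, H, ν)` for `(α,β)`. -/
structure IsEigenData (α β P : ℝ) (H : Sig → ℝ) (ν : Measure Sig) : Prop where
  P_pos : 0 < P
  H_cont : Continuous H
  H_pos : ∀ x, 0 < H x
  eigenFun : ∀ x, transfer α β H x = Real.exp P * H x
  prob : IsProbabilityMeasure ν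
  eigenMeas : ∀ f : Sig → ℝ, Continuous f →
    ∫ x, transfer α β f x ∂ν = Real.exp P * ∫ x, f x ∂ν

/-- The Gibbs measure `μ(B) = (∫_B H dν)/(∫ H dν)`. -/
def gibbs (H : Sig → ℝ) (ν : Measure Sig) : Measure Sig :=
  (ν.withDensity (fun x => ENNReal.ofReal (H x)) Set.univ)⁻¹ •
    ν.withDensity (fun x => ENNReal.ofReal (H x))

/-- Weak convergence (as `β → +∞`) of a family of measures to a measure `μ∞`:
convergence of integrals of every bounded continuous function. -/
def WeakLimit (μ : ℝ → Measure Sig) (μlim : Measure Sig) : Prop :=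
  ∀ f : Sig → ℝ, Continuous f → (∃ C : ℝ, ∀ x, |f x| ≤ C) →
    Tendsto (fun β => ∫ x, f x ∂(μ β)) atTop (nhds (∫ x, f x ∂μlim))

/-- `F(Z,β) = Σ_{k=0}^∞ e^{−kZ}·e^{β/2^{k+1}}`. -/
def Ffun (Z β : ℝ) : ℝ := ∑' k : ℕ, Real.exp (-(k : ℝ) * Z) * Real.exp (β / 2 ^ (k + 1))

/-- `Fpartial Z β m = F_{m-1}(Z,β) = Σ_{k=0}^{m-1} e^{−kZ}·e^{β/2^{k+1}}` (so `Fpartial Z β 0 = F_{-1} = 0`). -/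
def Fpartial (Z β : ℝ) (m : ℕ) : ℝ :=
  ∑ k ∈ Finset.range m, Real.exp (-(k : ℝ) * Z) * Real.exp (β / 2 ^ (k + 1))

/-! ### Rings and the potential -/

/-- The weight of the symbol `a` in the potential: `A_α = -w_a · 2^{-n}` on the ring `[a^n *_a]`
for `a ∈ {0, 1}`. The value at `2` is irrelevant. -/
def ringWeight (a : Fin 3) : ℝ := if a = 0 then 1 else 3

lemma measure_eq_ofReal (ν : Measure Sig) [IsFiniteMeasure ν] (s : Set Sig) :
    ν s = ENNReal.ofReal (ν.real s) := (ofReal_measureReal).symm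

lemma isClopen_coord (i : ℕ) (a : Fin 3) : IsClopen {x : Sig | x i = a} :=
  (isClopen_discrete ({a} : Set (Fin 3))).preimage (continuous_apply i)

lemma isClopen_block (a : Fin 3) (n : ℕ) : IsClopen {x : Sig | ∀ i < n, x i = a} := by
  have h : {x : Sig | ∀ i < n, x i = a} = ⋂ i ∈ Set.Iio n, {x : Sig | x i = a} := by
    ext x; simp
  rw [h]
  exact (Set.finite_Iio n).isClopen_biInter fun i _ => isClopen_coord i a

lemma isClopen_ringSet (a : Fin 3) (n : ℕ) : IsClopen (ringSet a n) :=
  (isClopen_block a n).inter (isClopen_coord n a).compl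

lemma dist3_of_mem_ringSet {a : Fin 3} {n : ℕ} {x : Sig} (hx : x ∈ ringSet a n) :
    dist3 x (fun _ => a) = (1 / 2) ^ n := by
  classical
  have hne : x ≠ fun _ => a := fun h => hx.2 (by rw [h])
  unfold dist3
  rw [dif_pos hne]
  congr 1
  rw [Nat.find_eq_iff]
  exact ⟨hx.2, fun i hi => not_not.mpr (hx.1 i hi)⟩

lemma pot_of_mem_ringSet {a : Fin 3} (ha : a ≠ 2) (α : ℝ) {n : ℕ} {x : Sig}
    (hx : x ∈ ringSet a (n + 1)) : pot α x = -(ringWeight a * (1 / 2) ^ (n + 1)) := by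
  have h0 : x 0 = a := hx.1 0 n.succ_pos
  have hd := dist3_of_mem_ringSet hx
  unfold pot ringWeight
  fin_cases a
  · have : dist3 x zeroSeq = (1 / 2) ^ (n + 1) := hd
    simp_all
  · have : dist3 x oneSeq = (1 / 2) ^ (n + 1) := hd
    simp_all
  · exact absurd rfl ha

lemma pot_nonpos {α : ℝ} (hα : 0 < α) (x : Sig) : pot α x ≤ 0 := by
  have hd : ∀ y, 0 ≤ dist3 x y := by
    intro y
    unfold dist3
    split_ifs <;> positivity
  unfold pot
  have h0 := hd zeroSeq
  have h1 := hd oneSeq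
  split_ifs <;> linarith

lemma cons_mem_block {a b : Fin 3} {n : ℕ} {x : Sig} :
    (∀ i < n + 1, cons b x i = a) ↔ b = a ∧ ∀ i < n, x i = a := by
  constructor
  · intro h
    exact ⟨h 0 n.succ_pos, fun i hi => h (i + 1) (by omega)⟩
  · rintro ⟨rfl, h⟩ (_ | i) hi
    · rfl
    · exact h i (by omega)

lemma cons_mem_ringSet {a b : Fin 3} {n : ℕ} {x : Sig} :
    cons b x ∈ ringSet a (n + 1) ↔ b = a ∧ x ∈ ringSet a n := by
  have h := cons_mem_block (a := a) (b := b) (n := n) (x := x)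
  constructor
  · rintro ⟨h1, h2⟩
    exact ⟨(h.1 h1).1, (h.1 h1).2, h2⟩
  · rintro ⟨rfl, h1, h2⟩
    exact ⟨h.2 ⟨rfl, h1⟩, h2⟩

/-! ### Consequences of the eigen-measure equation -/

lemma integral_transfer_indicator {α β P : ℝ} {ν : Measure Sig} (h : IsEigenMeasure α β P ν)
    {U : Set Sig} (hU : IsClopen U) :
    ∫ x, transfer α β (U.indicator 1) x ∂ν = Real.exp P * ν.real U := by
  have := h.prob
  rw [h.eigenMeas _ (continuous_one.indicator (by simp [hU.frontier_eq])), integral_indicator_one hU.isOpen.measurableSet]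

lemma transfer_ring {a : Fin 3} (ha : a ≠ 2) (α β : ℝ) (n : ℕ) (x : Sig) :
    transfer α β ((ringSet a (n + 1)).indicator 1) x =
      (ringSet a n).indicator
        (fun _ => Real.exp (-(β * (ringWeight a * (1 / 2) ^ (n + 1))))) x := by
  classical
  unfold transfer
  rw [Finset.sum_eq_single a]
  · by_cases hx : x ∈ ringSet a n
    · have hc : cons a x ∈ ringSet a (n + 1) := cons_mem_ringSet.2 ⟨rfl, hx⟩
      rw [Set.indicator_of_mem hc, Set.indicator_of_mem hx, pot_of_mem_ringSet ha α hc]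
      simp
    · have hc : cons a x ∉ ringSet a (n + 1) := fun hc => hx (cons_mem_ringSet.1 hc).2
      rw [Set.indicator_of_notMem hc, Set.indicator_of_notMem hx, mul_zero]
  · intro b _ hb
    have hc : cons b x ∉ ringSet a (n + 1) := fun hc => hb (cons_mem_ringSet.1 hc).1
    rw [Set.indicator_of_notMem hc, mul_zero]
  · simp

/-- One step of the recursion between rings. It includes `n = 0`, where `ringSet a 0` is the
complement of the cylinder `[a]`. -/
lemma ring_step {α β P : ℝ} {ν : Measure Sig} (h : IsEigenMeasure α β P ν)
    {a : Fin 3} (ha : a ≠ 2) (n : ℕ) :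
    Real.exp P * ν.real (ringSet a (n + 1)) =
      Real.exp (-(β * (ringWeight a * (1 / 2) ^ (n + 1)))) * ν.real (ringSet a n) := by
  rw [← integral_transfer_indicator h (isClopen_ringSet a (n + 1))]
  simp_rw [transfer_ring ha]
  rw [integral_indicator_const _ (isClopen_ringSet a n).isOpen.measurableSet, smul_eq_mul, mul_comm]

/-- Iterating `ring_step`, with `∑_{k ≤ n} 2^{-k} = 1 - 2^{-n}`. -/
lemma ring_formula {α β P : ℝ} {ν : Measure Sig} (h : IsEigenMeasure α β P ν)
    {a : Fin 3} (ha : a ≠ 2) (n : ℕ) :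
    ν.real (ringSet a n) =
      Real.exp (-(n * P) - β * (ringWeight a * (1 - (1 / 2) ^ n))) * ν.real (ringSet a 0) := by
  induction n with
  | zero => simp
  | succ n ih =>
    have hs := ring_step h ha n
    rw [ih, ← mul_assoc, ← Real.exp_add] at hs
    apply mul_left_cancel₀ (Real.exp_pos P).ne'
    rw [hs, ← mul_assoc (Real.exp P), ← Real.exp_add]
    congr 2
    push_cast
    ring

lemma ring_ratio {α β P : ℝ} {ν : Measure Sig} (h : IsEigenMeasure α β P ν) (n : ℕ) :
    ν.real (ringSet 0 n) * ν.real (ringSet 1 0) =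
      Real.exp (2 * β * (1 - (1 / 2) ^ n)) *
        (ν.real (ringSet 1 n) * ν.real (ringSet 0 0)) := by
  rw [ring_formula h (a := 0) (by decide) n, ring_formula h (a := 1) (by decide) n,
    mul_assoc (Real.exp _) (ν.real (ringSet 1 0)), ← mul_assoc (Real.exp _) (Real.exp _),
    ← Real.exp_add, mul_comm (ν.real (ringSet 1 0)), mul_assoc]
  congr 2
  simp [ringWeight]
  ring

lemma ring_ratio_one {α β P : ℝ} {ν : Measure Sig} (h : IsEigenMeasure α β P ν)
    {n : ℕ} (hn : 2 ≤ n) :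
    ν.real (ringSet 0 n) * ν.real (ringSet 1 1) =
      Real.exp (β * (1 - 1 / 2 ^ (n - 1))) *
        (ν.real (ringSet 0 1) * ν.real (ringSet 1 n)) := by
  obtain ⟨m, rfl⟩ : ∃ m, n = m + 1 := ⟨n - 1, by omega⟩
  have e : Real.exp (-((m + 1 : ℕ) * P) - β * (ringWeight 0 * (1 - (1 / 2) ^ (m + 1)))) *
        Real.exp (-((1 : ℕ) * P) - β * (ringWeight 1 * (1 - (1 / 2) ^ 1))) =
      Real.exp (β * (1 - 1 / 2 ^ (m + 1 - 1))) *
        (Real.exp (-((1 : ℕ) * P) - β * (ringWeight 0 * (1 - (1 / 2) ^ 1))) *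
          Real.exp (-((m + 1 : ℕ) * P) - β * (ringWeight 1 * (1 - (1 / 2) ^ (m + 1))))) := by
    rw [← Real.exp_add, ← Real.exp_add, ← Real.exp_add]
    congr 1
    simp only [ringWeight, Nat.add_sub_cancel, one_div, inv_pow]
    rw [pow_succ]
    simp
    ring
  rw [ring_formula h (a := 0) (by decide) (m + 1), ring_formula h (a := 1) (by decide) (m + 1),
    ring_formula h (a := 0) (by decide) 1, ring_formula h (a := 1) (by decide) 1]
  linear_combination (ν.real (ringSet 0 0) * ν.real (ringSet 1 0)) * e

/-! ### Masses of the one-letter cylinders -/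

lemma measure_cyl_two_pos {α β P : ℝ} {ν : Measure Sig} (h : IsEigenMeasure α β P ν) :
    0 < ν.real (cyl 2) := by
  have := h.prob
  have hi := integral_transfer_indicator h (U := cyl 2) (isClopen_coord 0 2)
  have ht : ∀ x, transfer α β ((cyl 2).indicator 1) x = Real.exp (-(β * α)) := by
    intro x
    simp [transfer, Fin.sum_univ_three, cyl, cons, pot, Set.indicator]
  simp_rw [ht] at hi
  simp only [integral_const, probReal_univ, one_smul] at hi
  have := Real.exp_pos (-(β * α))
  rw [hi] at this
  exact pos_of_mul_pos_right this (Real.exp_pos P).le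

/-- The cylinders `[a^n]` shrink at least by the factor `e^{-P}` at each step, because `A_α ≤ 0`. -/
lemma block_le {α β P : ℝ} (hα : 0 < α) (hβ : 0 < β) {ν : Measure Sig}
    (h : IsEigenMeasure α β P ν) (a : Fin 3) (n : ℕ) :
    ν.real {x | ∀ i < n, x i = a} ≤ Real.exp (-P) ^ n := by
  have := h.prob
  induction n with
  | zero => simp
  | succ n ih =>
    have hi := integral_transfer_indicator h (isClopen_block a (n + 1))
    have hle : ∫ x, transfer α β ({x : Sig | ∀ i < n + 1, x i = a}.indicator 1) x ∂ν ≤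
        ∫ x, ({x : Sig | ∀ i < n, x i = a}.indicator 1 : Sig → ℝ) x ∂ν := by
      refine integral_mono_of_nonneg (ae_of_all _ fun x => ?_) ?_ (ae_of_all _ fun x => ?_)
      · refine Finset.sum_nonneg fun b _ => mul_nonneg (Real.exp_pos _).le ?_
        exact Set.indicator_nonneg (fun _ _ => zero_le_one) _
      · exact (integrable_const (1 : ℝ)).indicator (isClopen_block a n).isOpen.measurableSet
      · unfold transfer
        rw [Finset.sum_eq_single a]
        · by_cases hx : ∀ i < n, x i = a
          · have hc : cons a x ∈ {x : Sig | ∀ i < n + 1, x i = a} := cons_mem_block.2 ⟨rfl, hx⟩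
            rw [Set.indicator_of_mem hc, Set.indicator_of_mem (by exact hx)]
            simpa using mul_nonpos_of_nonneg_of_nonpos hβ.le (pot_nonpos hα (cons a x))
          · have hc : cons a x ∉ {x : Sig | ∀ i < n + 1, x i = a} :=
              fun hc => hx (cons_mem_block.1 hc).2
            rw [Set.indicator_of_notMem hc, Set.indicator_of_notMem (by exact hx), mul_zero]
        · intro b _ hb
          have hc : cons b x ∉ {x : Sig | ∀ i < n + 1, x i = a} :=
            fun hc => hb (cons_mem_block.1 hc).1
          rw [Set.indicator_of_notMem hc, mul_zero]
        · simp
    rw [hi, integral_indicator_one (isClopen_block a n).isOpen.measurableSet] at hle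
    have h2 := mul_le_mul_of_nonneg_left (hle.trans ih) (Real.exp_pos (-P)).le
    rw [← mul_assoc, ← Real.exp_add, neg_add_cancel, Real.exp_zero, one_mul] at h2
    rwa [pow_succ']

/-- The hypothesis `P > 0` enters here: the fixed point carries no mass. -/
lemma measure_zeroSeq {α β P : ℝ} (hα : 0 < α) (hβ : 0 < β) {ν : Measure Sig}
    (h : IsEigenMeasure α β P ν) : ν {zeroSeq} = 0 := by
  have := h.prob
  have hlim : Tendsto (fun n : ℕ => Real.exp (-P) ^ n) atTop (𝓝 0) :=
    tendsto_pow_atTop_nhds_zero_of_lt_one (Real.exp_pos _).le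
      (Real.exp_lt_one_iff.2 (neg_lt_zero.2 h.P_pos))
  have hle : ν.real {zeroSeq} ≤ 0 := by
    refine ge_of_tendsto' hlim fun n => le_trans ?_ (block_le hα hβ h 0 n)
    exact measureReal_mono (by simp [zeroSeq])
  exact (measureReal_eq_zero_iff).1 (le_antisymm hle measureReal_nonneg)

lemma measure_cyl_zero_le {α β P : ℝ} (hα : 0 < α) (hβ : 0 < β) {ν : Measure Sig}
    (h : IsEigenMeasure α β P ν) : ν (cyl 0) ≤ ∑' n, ν (ringSet 0 (n + 1)) := by
  classical
  have hsub : cyl 0 ⊆ {zeroSeq} ∪ ⋃ n, ringSet 0 (n + 1) := by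
    intro x hx
    by_cases hz : ∃ i, x i ≠ 0
    · right
      obtain ⟨k, hk⟩ : ∃ k, Nat.find hz = k + 1 := by
        refine Nat.exists_eq_succ_of_ne_zero fun h0 => ?_
        exact (h0 ▸ Nat.find_spec hz) hx
      refine Set.mem_iUnion.2 ⟨k, fun i hi => ?_, hk ▸ Nat.find_spec hz⟩
      exact not_not.1 (Nat.find_min hz (hk ▸ hi))
    · left
      push Not at hz
      exact funext hz
  calc ν (cyl 0) ≤ ν {zeroSeq} + ν (⋃ n, ringSet 0 (n + 1)) :=
        (measure_mono hsub).trans (measure_union_le _ _)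
    _ ≤ _ := by
        rw [measure_zeroSeq hα hβ h, zero_add]
        exact measure_iUnion_le _

lemma tsum_ring_le (ν : Measure Sig) : ∑' n, ν (ringSet 1 (n + 1)) ≤ ν (cyl 1) := by
  rw [← measure_iUnion]
  · exact measure_mono (Set.iUnion_subset fun n x hx => hx.1 0 n.succ_pos)
  · have key : ∀ m n, m < n → Disjoint (ringSet 1 (m + 1)) (ringSet 1 (n + 1)) := fun m n hmn =>
      Set.disjoint_left.2 fun x hx hy => hx.2 (hy.1 (m + 1) (by omega))
    intro m n hmn
    rcases lt_or_gt_of_ne hmn with hlt | hlt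
    · exact key m n hlt
    · exact (key n m hlt).symm
  · exact fun n => (isClopen_ringSet 1 (n + 1)).isOpen.measurableSet

/-- Obtained by bounding the factor in `ring_ratio` by `e^{2β}` and summing over the rings. -/
lemma cyl_ratio {α β P : ℝ} (hα : 0 < α) (hβ : 0 < β) {ν : Measure Sig}
    (h : IsEigenMeasure α β P ν) :
    ν.real (cyl 0) * ν.real (ringSet 1 0) ≤
      Real.exp (2 * β) * (ν.real (cyl 1) * ν.real (ringSet 0 0)) := by
  have := h.prob
  have hstep : ∀ n, ν (ringSet 0 (n + 1)) * ν (ringSet 1 0) ≤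
      ENNReal.ofReal (Real.exp (2 * β)) * (ν (ringSet 1 (n + 1)) * ν (ringSet 0 0)) := by
    intro n
    simp only [measure_eq_ofReal]
    rw [← ENNReal.ofReal_mul measureReal_nonneg, ← ENNReal.ofReal_mul measureReal_nonneg,
      ← ENNReal.ofReal_mul (Real.exp_pos _).le, ring_ratio h]
    apply ENNReal.ofReal_le_ofReal
    refine mul_le_mul_of_nonneg_right (Real.exp_le_exp.2 ?_) (by positivity)
    have : (0 : ℝ) < (1 / 2) ^ (n + 1) := by positivity
    nlinarith
  have hE : ν (cyl 0) * ν (ringSet 1 0) ≤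
      ENNReal.ofReal (Real.exp (2 * β)) * (ν (cyl 1) * ν (ringSet 0 0)) :=
    calc ν (cyl 0) * ν (ringSet 1 0)
        ≤ (∑' n, ν (ringSet 0 (n + 1))) * ν (ringSet 1 0) := by
          gcongr; exact measure_cyl_zero_le hα hβ h
      _ = ∑' n, ν (ringSet 0 (n + 1)) * ν (ringSet 1 0) := ENNReal.tsum_mul_right.symm
      _ ≤ ∑' n, ENNReal.ofReal (Real.exp (2 * β)) *
            (ν (ringSet 1 (n + 1)) * ν (ringSet 0 0)) := ENNReal.tsum_le_tsum hstep
      _ = ENNReal.ofReal (Real.exp (2 * β)) *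
            ((∑' n, ν (ringSet 1 (n + 1))) * ν (ringSet 0 0)) := by
          rw [ENNReal.tsum_mul_left, ENNReal.tsum_mul_right]
      _ ≤ _ := by gcongr; exact tsum_ring_le ν
  simp only [measure_eq_ofReal] at hE
  rw [← ENNReal.ofReal_mul measureReal_nonneg, ← ENNReal.ofReal_mul measureReal_nonneg,
    ← ENNReal.ofReal_mul (Real.exp_pos _).le] at hE
  exact (ENNReal.ofReal_le_ofReal_iff (by positivity)).1 hE

lemma measure_ring_zero (a : Fin 3) (ν : Measure Sig) [IsProbabilityMeasure ν] :
    ν.real (ringSet a 0) = 1 - ν.real (cyl a) := by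
  have h : ringSet a 0 = (cyl a)ᶜ := by
    ext x; simp [ringSet, cyl]
  rw [h]
  exact probReal_compl_eq_one_sub (isClopen_coord 0 a).isOpen.measurableSet

/-- The three one-letter cylinders partition `Σ`. -/
lemma measure_cyl_sum (ν : Measure Sig) [IsProbabilityMeasure ν] :
    ν.real (cyl 0) + ν.real (cyl 1) + ν.real (cyl 2) = 1 := by
  have hd : ∀ a b : Fin 3, a ≠ b → Disjoint (cyl a) (cyl b) := fun a b hab =>
    Set.disjoint_left.2 fun x hx hy => hab (Eq.trans (Eq.symm hx) hy)
  have hm : ∀ a, MeasurableSet (cyl a) := fun a => (isClopen_coord 0 a).isOpen.measurableSet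
  rw [← measureReal_union (hd 0 1 (by decide)) (hm 1), ← measureReal_union _ (hm 2)]
  · have : cyl 0 ∪ cyl 1 ∪ cyl 2 = Set.univ := by
      ext x
      have : ∀ b : Fin 3, (b = 0 ∨ b = 1) ∨ b = 2 := by decide
      exact iff_of_true (this (x 0)) trivial
    rw [this, probReal_univ]
  · exact Set.disjoint_union_left.2 ⟨hd 0 2 (by decide), hd 1 2 (by decide)⟩

lemma ring_one_zero_pos {α β P : ℝ} {ν : Measure Sig} (h : IsEigenMeasure α β P ν) :
    0 < ν.real (ringSet 1 0) := by
  have := h.prob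
  have h2 := measure_cyl_two_pos h
  have hs := measure_cyl_sum ν
  have h0 : 0 ≤ ν.real (cyl 0) := measureReal_nonneg
  rw [measure_ring_zero]
  linarith

lemma ring_one_pos {α β P : ℝ} {ν : Measure Sig} (h : IsEigenMeasure α β P ν) (n : ℕ) :
    0 < ν.real (ringSet 1 n) := by
  rw [ring_formula h (by decide)]
  exact mul_pos (Real.exp_pos _) (ring_one_zero_pos h)

/-- With `A = 1 - ν[0]`, the inequality `cyl_ratio` gives `(1 - A)² ≤ e^{2β} A²`, as
`ν[1] ≤ A` and `1 - ν[1] ≥ ν[0] = 1 - A`. -/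
lemma ring_zero_zero_ge {α β P : ℝ} (hα : 0 < α) (hβ : 0 < β) {ν : Measure Sig}
    (h : IsEigenMeasure α β P ν) : 1 ≤ 2 * Real.exp β * ν.real (ringSet 0 0) := by
  have := h.prob
  have hr := cyl_ratio hα hβ h
  have h2 := measure_cyl_two_pos h
  have hs := measure_cyl_sum ν
  have h0 : 0 ≤ ν.real (cyl 0) := measureReal_nonneg
  have h1 : 0 ≤ ν.real (cyl 1) := measureReal_nonneg
  have e : Real.exp (2 * β) = Real.exp β ^ 2 := by rw [← Real.exp_nat_mul]; norm_num
  have hE : 1 ≤ Real.exp β := Real.one_le_exp hβ.le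
  rw [measure_ring_zero, measure_ring_zero, e] at hr
  rw [measure_ring_zero]
  set p := ν.real (cyl 0)
  set q := ν.real (cyl 1)
  set E := Real.exp β
  have hsq : p ^ 2 ≤ (E * (1 - p)) ^ 2 :=
    calc p ^ 2 ≤ p * (1 - q) := by rw [sq]; gcongr; linarith
      _ ≤ E ^ 2 * (q * (1 - p)) := hr
      _ ≤ E ^ 2 * ((1 - p) * (1 - p)) := by gcongr <;> linarith
      _ = _ := by ring
  have hA : 0 ≤ 1 - p := by linarith
  have := (sq_le_sq₀ h0 (by positivity)).1 hsq
  nlinarith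

/-- `ν[1*₁] ≤ 2 ν[0*₀]`, so that the ratio at level one costs only a bounded factor. -/
lemma ring_one_le {α β P : ℝ} (hα : 0 < α) (hβ : 0 < β) {ν : Measure Sig}
    (h : IsEigenMeasure α β P ν) : ν.real (ringSet 1 1) ≤ 2 * ν.real (ringSet 0 1) := by
  have := h.prob
  have hA := ring_zero_zero_ge hα hβ h
  have hB : ν.real (ringSet 1 0) ≤ 1 := measureReal_le_one
  have hr := ring_ratio h 1
  have e : 2 * β * (1 - (1 / 2) ^ 1) = β := by ring
  rw [e] at hr
  have h1 : 0 ≤ ν.real (ringSet 1 1) := measureReal_nonneg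
  have h0 : 0 ≤ ν.real (ringSet 0 1) := measureReal_nonneg
  nlinarith [mul_le_mul_of_nonneg_left hA h1, mul_le_mul_of_nonneg_left hB h0]

/-- (i) `ν[0^n*₀]·ν[1*₁] = e^{β(1−1/2^{n−1})}·ν[0*₀]·ν[1^n*₁]` for `n ≥ 2`;
(ii) the ratio `ν_β[0^n*₀]/ν_β[1^n*₁]` goes to `+∞` with exponential speed larger than
`1 − 1/2^{n−1} − ε` for every `ε > 0`. -/
theorem eigenMeasure_ratio_rings (α : ℝ) (hα : 0 < α) :
    (∀ β > (0 : ℝ), ∀ P : ℝ, ∀ ν : Measure Sig, IsEigenMeasure α β P ν →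
      ∀ n : ℕ, 2 ≤ n →
        ν (ringSet 0 n) * ν (ringSet 1 1) =
          ENNReal.ofReal (Real.exp (β * (1 - 1 / 2 ^ (n - 1)))) *
            (ν (ringSet 0 1) * ν (ringSet 1 n))) ∧
    (∀ (P : ℝ → ℝ) (ν : ℝ → Measure Sig),
      (∀ β > (0 : ℝ), IsEigenMeasure α β (P β) (ν β)) →
      ∀ n : ℕ, 2 ≤ n → ∀ ε : ℝ, 0 < ε → ∃ β₁ : ℝ, ∀ β ≥ β₁,
        0 < ν β (ringSet 1 n) ∧
        ENNReal.ofReal (Real.exp (β * (1 - 1 / 2 ^ (n - 1) - ε))) * ν β (ringSet 1 n) ≤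
          ν β (ringSet 0 n)) := by
  constructor
  · intro β _ P ν h n hn
    have := h.prob
    simp only [measure_eq_ofReal]
    rw [← ENNReal.ofReal_mul measureReal_nonneg, ← ENNReal.ofReal_mul measureReal_nonneg,
      ← ENNReal.ofReal_mul (Real.exp_pos _).le, ring_ratio_one h hn]
  · intro P ν hν n hn ε hε
    -- From `β ≥ 1 / ε` on, `e^{-βε} ≤ e^{-1} ≤ 1/2` absorbs the factor of `ring_one_le`.
    refine ⟨1 / ε, fun β hβ => ?_⟩
    have hβ0 : 0 < β := lt_of_lt_of_le (by positivity) hβ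
    have h := hν β hβ0
    have := h.prob
    have hn1 := ring_one_pos h n
    have h11 := ring_one_pos h 1
    refine ⟨(ENNReal.toReal_pos_iff.1 hn1).1, ?_⟩
    simp only [measure_eq_ofReal]
    rw [← ENNReal.ofReal_mul (Real.exp_pos _).le]
    apply ENNReal.ofReal_le_ofReal
    have hβε : 1 ≤ β * ε := by
      rw [ge_iff_le, div_le_iff₀ hε] at hβ
      exact hβ
    have h2 : 2 * Real.exp (-(β * ε)) ≤ 1 := by
      have h3 : 2 ≤ Real.exp (β * ε) := by linarith [Real.add_one_le_exp (β * ε)]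
      have h4 : Real.exp (β * ε) * Real.exp (-(β * ε)) = 1 := by
        rw [← Real.exp_add, add_neg_cancel, Real.exp_zero]
      nlinarith [Real.exp_pos (-(β * ε))]
    have hsplit : Real.exp (β * (1 - 1 / 2 ^ (n - 1) - ε)) =
        Real.exp (β * (1 - 1 / 2 ^ (n - 1))) * Real.exp (-(β * ε)) := by
      rw [← Real.exp_add]
      congr 1
      ring
    have h01 : 0 ≤ (ν β).real (ringSet 0 1) := measureReal_nonneg
    refine le_of_mul_le_mul_right ?_ h11
    rw [ring_ratio_one h hn, hsplit]
    calc Real.exp (β * (1 - 1 / 2 ^ (n - 1))) * Real.exp (-(β * ε)) *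
          (ν β).real (ringSet 1 n) * (ν β).real (ringSet 1 1)
        ≤ Real.exp (β * (1 - 1 / 2 ^ (n - 1))) * Real.exp (-(β * ε)) *
          (ν β).real (ringSet 1 n) * (2 * (ν β).real (ringSet 0 1)) := by
          gcongr
          exact ring_one_le hα hβ0 h
      _ = (2 * Real.exp (-(β * ε))) * (Real.exp (β * (1 - 1 / 2 ^ (n - 1))) *
          ((ν β).real (ringSet 0 1) * (ν β).real (ringSet 1 n))) := by ring
      _ ≤ 1 * (Real.exp (β * (1 - 1 / 2 ^ (n - 1))) *
          ((ν β).real (ringSet 0 1) * (ν β).real (ringSet 1 n))) := by gcongr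
      _ = _ := one_mul _

end
end

section
/- Fix α > 0, β ∈ ℝ and P ∈ ℝ. (i) For every k ∈ ℕ, the function L_β^k 𝟙 (the k-th iterate of the transfer operator applied to the constant function 1) is constant on [2] and constant on each cylinder [0^n*₀] and [1^n*₁] (n ≥ 1). (ii) Consequently, if H : Σ → ℝ satisfies H(x) = lim_{N→∞} (1/N)·Σ_{k=0}^{N−1} e^{−kP}·(L_β^k 𝟙)(x) for every x ∈ Σ (the limits being assumed to exist), then H is constant on [2] and constant on each cylinder [0^n*₀] and [1^n*₁] (n ≥ 1). -/
/-!
Call two points equivalent when both lie in `[2]`, or both in the same ring `[0^n*₀]`, or both in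
the same ring `[1^n*₁]` (`n ≥ 1`). A function is locally ring-constant exactly when it respects
this relation (`locallyRingConstant_iff`). The potential respects it, because on `[a^n*_a]` the
distance to `a^∞` is `(1/2)^n` (`SameRing.pot_eq`). Prepending a symbol preserves it: prepending
`a ∈ {0,1}` sends `[a^n*_a]` into `[a^(n+1)*_a]` and every point not starting with `a` into
`[a^1*_a]` (`SameRing.cons`). Hence `L_β` preserves the locally ring-constant functions, which
gives (i) by induction; (ii) follows because equivalent points have the same Cesàro averages, and
limits are unique.
-/

open MeasureTheory Filter Topology

noncomputable section

/-- Two points lie in a common cell: `[2]`, or a ring `[0^m*₀]` or `[1^m*₁]` with `m ≥ 1`. The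
fixed points `0^∞` and `1^∞` lie in no cell, so the relation is not reflexive there. -/
def SameRing (x y : Sig) : Prop :=
  (x ∈ cyl 2 ∧ y ∈ cyl 2) ∨
  ∃ a : Fin 3, a ≠ 2 ∧ ∃ m : ℕ, 1 ≤ m ∧ x ∈ ringSet a m ∧ y ∈ ringSet a m

lemma locallyRingConstant_iff (H : Sig → ℝ) :
    LocallyRingConstant H ↔ ∀ x y, SameRing x y → H x = H y := by
  constructor
  · rintro ⟨h2, h0, h1⟩ x y (⟨hx, hy⟩ | ⟨a, ha, m, hm, hx, hy⟩)
    · exact h2 x hx y hy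
    · fin_cases a
      · exact h0 m hm x hx y hy
      · exact h1 m hm x hx y hy
      · exact absurd rfl ha
  · intro h
    exact ⟨fun x hx y hy => h x y (Or.inl ⟨hx, hy⟩),
      fun m hm x hx y hy => h x y (Or.inr ⟨0, by decide, m, hm, hx, hy⟩),
      fun m hm x hx y hy => h x y (Or.inr ⟨1, by decide, m, hm, hx, hy⟩)⟩

lemma dist3_const_of_mem_ringSet {a : Fin 3} {m : ℕ} {x : Sig} (hx : x ∈ ringSet a m) :
    dist3 x (fun _ => a) = (1 / 2 : ℝ) ^ m := by
  classical
  have hne : x ≠ fun _ => a := fun h => hx.2 (congrFun h m)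
  unfold dist3
  rw [dif_pos hne]
  congr 1
  rw [Nat.find_eq_iff]
  exact ⟨hx.2, fun i hi => not_not.mpr (hx.1 i hi)⟩

lemma SameRing.pot_eq (α : ℝ) {x y : Sig} (h : SameRing x y) : pot α x = pot α y := by
  rcases h with ⟨hx, hy⟩ | ⟨a, ha, m, hm, hx, hy⟩
  · have hx : x 0 = 2 := hx
    have hy : y 0 = 2 := hy
    simp [pot, hx, hy]
  · have hx0 := hx.1 0 hm
    have hy0 := hy.1 0 hm
    have hd := (dist3_const_of_mem_ringSet hx).trans (dist3_const_of_mem_ringSet hy).symm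
    fin_cases a
    · have hd : dist3 x zeroSeq = dist3 y zeroSeq := hd
      simp_all [pot]
    · have hd : dist3 x oneSeq = dist3 y oneSeq := hd
      simp_all [pot]
    · exact absurd rfl ha

lemma cons_mem_ringSet_succ {a : Fin 3} {m : ℕ} {x : Sig} (hx : x ∈ ringSet a m) :
    cons a x ∈ ringSet a (m + 1) := by
  refine ⟨fun i hi => ?_, hx.2⟩
  cases i with
  | zero => rfl
  | succ i => exact hx.1 i (by omega)

lemma SameRing.cons {x y : Sig} (h : SameRing x y) (a : Fin 3) :
    SameRing (cons a x) (cons a y) := by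
  by_cases ha : a = 2
  · exact Or.inl ⟨ha, ha⟩
  -- Either `x, y` share a ring of the symbol `a`, or neither starts with `a`;
  -- the latter says that both lie in `ringSet a 0`.
  have key : ∃ m, x ∈ ringSet a m ∧ y ∈ ringSet a m := by
    rcases h with ⟨hx, hy⟩ | ⟨b, -, m, hm, hx, hy⟩
    · have hx : x 0 = 2 := hx
      have hy : y 0 = 2 := hy
      exact ⟨0, ⟨by simp, by rw [hx]; exact Ne.symm ha⟩, ⟨by simp, by rw [hy]; exact Ne.symm ha⟩⟩
    · by_cases hab : b = a
      · subst hab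
        exact ⟨m, hx, hy⟩
      · exact ⟨0, ⟨by simp, by rwa [hx.1 0 hm]⟩, ⟨by simp, by rwa [hy.1 0 hm]⟩⟩
  obtain ⟨m, hx, hy⟩ := key
  exact Or.inr ⟨a, ha, m + 1, by omega, cons_mem_ringSet_succ hx, cons_mem_ringSet_succ hy⟩

lemma LocallyRingConstant.transfer {α β : ℝ} {f : Sig → ℝ} (hf : LocallyRingConstant f) :
    LocallyRingConstant (transfer α β f) := by
  rw [locallyRingConstant_iff] at hf ⊢
  intro x y h
  refine Finset.sum_congr rfl fun a _ => ?_
  rw [(h.cons a).pot_eq α, hf _ _ (h.cons a)]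

lemma locallyRingConstant_iterate (α β : ℝ) (k : ℕ) :
    LocallyRingConstant ((transfer α β)^[k] (fun _ => 1)) := by
  induction k with
  | zero => exact (locallyRingConstant_iff _).2 fun _ _ _ => rfl
  | succ k ih =>
    rw [Function.iterate_succ_apply']
    exact ih.transfer

/-- (i) Each iterate `L_β^k 𝟙` is constant on `[2]` and on each ring `[0^n*₀]`, `[1^n*₁]`;
(ii) consequently any pointwise Cesàro-type limit `H` of `e^{−kP} L_β^k 𝟙` is as well. -/
theorem transfer_iterates_ring_constant (α β P : ℝ) (hα : 0 < α) :
    (∀ k : ℕ, LocallyRingConstant ((transfer α β)^[k] (fun _ => 1))) ∧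
    (∀ H : Sig → ℝ,
      (∀ x : Sig, Tendsto (fun N : ℕ => (1 / (N : ℝ)) *
          ∑ k ∈ Finset.range N,
            Real.exp (-(k : ℝ) * P) * ((transfer α β)^[k] (fun _ => 1) x))
        atTop (nhds (H x))) →
      LocallyRingConstant H) := by
  refine ⟨locallyRingConstant_iterate α β, fun H hH => ?_⟩
  rw [locallyRingConstant_iff]
  intro x y h
  refine tendsto_nhds_unique (hH x) ((hH y).congr fun N => ?_)
  congr 1
  refine Finset.sum_congr rfl fun k _ => ?_
  rw [(locallyRingConstant_iff _).1 (locallyRingConstant_iterate α β k) x y h]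

end
end
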